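/- Let n ≥ 2, R > 0, and let 𝔹_R be the open ball of radius R in ℝⁿ. For x ∈ 𝔹_R, let 𝒯_{n,R}(x) be the smallest constant such that |div u(x)| ≤ 𝒯_{n,R}(x)·‖g‖_{[L^∞(∂𝔹_R)]^n} for every vector field u that is the Poisson integral over ∂𝔹_R of g ∈ [L^∞(∂𝔹_R)]^n. Then 𝒯_{n,R}(x) = [2^{n−1} ω_{n−1} R^{n−1} / (ω_n (R+|x|)^{n−1} (R−|x|))] ∫₀^{π/2} Q_n(θ; |x|/R) sin^{n−2}θ dθ, where Q_n(θ; r) = [ (n−(n−2)r)² + 4 n(n−2) r cos²θ ]^{1/2} / [1 + ((1−r)/(1+r))² tan²θ]^{(n−2)/2}. -/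

import Mathlib

open MeasureTheory Real Filter Metric
open scoped Real RealInnerProductSpace

noncomputable section

/-- `Eu n` is the Euclidean space `ℝⁿ`. -/
abbrev Eu (n : ℕ) := EuclideanSpace ℝ (Fin n)

/-- `ω_n`: the surface area of the unit sphere `S^{n-1}` in `ℝⁿ`,
given by the classical formula `2 π^{n/2} / Γ(n/2)`. -/
def sphereArea (n : ℕ) : ℝ := 2 * π ^ ((n : ℝ) / 2) / Real.Gamma ((n : ℝ) / 2)

/-- Scaling map from the unit sphere onto the sphere of radius `R` in `ℝⁿ`. -/
def sphereScale (n : ℕ) (R : ℝ) (hR : 0 < R) (ω : Metric.sphere (0 : Eu n) 1) :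
    Metric.sphere (0 : Eu n) R :=
  ⟨R • (ω : Eu n), by
    have h1 : ‖(ω : Eu n)‖ = 1 := by simpa using ω.2
    simp [mem_sphere_zero_iff_norm, norm_smul, h1, abs_of_pos hR]⟩

/-- The surface measure `σ` on the sphere of radius `R` in `ℝⁿ`: the pushforward
under the scaling map of `R^{n-1}` times the surface measure of the unit sphere. -/
def sphereMeasureR (n : ℕ) (R : ℝ) (hR : 0 < R) : Measure (Metric.sphere (0 : Eu n) R) :=
  Measure.map (sphereScale n R hR) ((ENNReal.ofReal (R ^ (n - 1))) • (volume.toSphere))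

/-- The divergence `div u(x) = ∑ⱼ ∂uⱼ/∂xⱼ (x)` of a vector field `u : ℝⁿ → ℝⁿ`. -/
def divg {n : ℕ} (u : Eu n → Eu n) (x : Eu n) : ℝ :=
  ∑ j, fderiv ℝ (fun y => u y j) x (EuclideanSpace.single j 1)

/-- The function `Q_n(θ; r)` from the statement. -/
def Qfun (n : ℕ) (θ r : ℝ) : ℝ :=
  Real.sqrt (((n : ℝ) - ((n : ℝ) - 2) * r) ^ 2 +
      4 * (n : ℝ) * ((n : ℝ) - 2) * r * Real.cos θ ^ 2) /
    (1 + ((1 - r) / (1 + r)) ^ 2 * Real.tan θ ^ 2) ^ (((n : ℝ) - 2) / 2)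

/-- The claimed value of the sharp coefficient `𝒯_{n,R}(x)` (with `ρ = |x|`). -/
def TcoefR (n : ℕ) (R ρ : ℝ) : ℝ :=
  (2 ^ (n - 1) * sphereArea (n - 1) * R ^ (n - 1) /
      (sphereArea n * (R + ρ) ^ (n - 1) * (R - ρ))) *
    ∫ θ in (0:ℝ)..(π / 2), Qfun n θ (ρ / R) * Real.sin θ ^ (n - 2)

/-- The Poisson integral `u(x) = (1/(ωₙ R)) ∫_{∂𝔹_R} ((R²-|x|²)/|y-x|ⁿ) g(y) dσ_y` of a
vector-valued boundary function `g : ∂𝔹_R → ℝⁿ`. -/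
def poissonBallRV {n : ℕ} (R : ℝ) (hR : 0 < R)
    (g : Metric.sphere (0 : Eu n) R → Eu n) (x : Eu n) : Eu n :=
  (1 / (sphereArea n * R)) • ∫ y : Metric.sphere (0 : Eu n) R,
    ((R ^ 2 - ‖x‖ ^ 2) / ‖(y : Eu n) - x‖ ^ n) • g y ∂(sphereMeasureR n R hR)

/-!
Differentiating under the integral sign gives `div u(x) = ∫ ⟪∇ₓP(x, y), g(y)⟫ dσ(y)`, where `P` is
the normalised Poisson kernel. By `L¹`–`L^∞` duality the sharp constant is `∫ |∇ₓP(x, y)| dσ(y)`,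
attained by `g = ∇ₓP / |∇ₓP|`. On the sphere, `|∇ₓP(x, y)|` depends only on the angle `φ` between
`x` and `y`, so this is a one-dimensional integral over `φ ∈ (0, π)`, and the substitution
`tan (φ / 2) = ((R - |x|) / (R + |x|)) tan θ` brings it to the form with `Q_n`.
-/

open scoped Topology

section PolarCoordinates

lemma sphereArea_pos {n : ℕ} (hn : 0 < n) : 0 < sphereArea n := by
  unfold sphereArea
  exact div_pos (by positivity) (Real.Gamma_pos_of_pos (by positivity))

lemma toSphere_univ_eq_sphereArea {n : ℕ} (hn : 0 < n) :
    (volume : Measure (Eu n)).toSphere Set.univ = ENNReal.ofReal (sphereArea n) := by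
  have : Nonempty (Fin n) := ⟨⟨0, hn⟩⟩
  have hhalf : (0 : ℝ) < (n : ℝ) / 2 := by positivity
  have hGamma : Real.Gamma ((n : ℝ) / 2) ≠ 0 := (Real.Gamma_pos_of_pos hhalf).ne'
  have hsqrt : √π ^ n = π ^ ((n : ℝ) / 2) := by
    rw [Real.sqrt_eq_rpow, ← Real.rpow_natCast, ← Real.rpow_mul pi_pos.le]
    ring_nf
  rw [Measure.toSphere_apply_univ, EuclideanSpace.volume_ball, finrank_euclideanSpace,
    Fintype.card_fin, ENNReal.ofReal_one, one_pow, one_mul, ← ENNReal.ofReal_natCast,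
    ← ENNReal.ofReal_mul (by positivity), hsqrt, Real.Gamma_add_one hhalf.ne', sphereArea]
  congr 1
  field_simp

lemma lintegral_volumeIoiPow (k : ℕ) {f : ℝ → ENNReal} (hf : Measurable f) :
    ∫⁻ r : Set.Ioi (0 : ℝ), f r ∂(Measure.volumeIoiPow k) =
      ∫⁻ r in Set.Ioi (0 : ℝ), ENNReal.ofReal (r ^ k) * f r := by
  rw [Measure.volumeIoiPow, lintegral_withDensity_eq_lintegral_mul _ (by fun_prop) (by fun_prop)]
  exact lintegral_subtype_comap measurableSet_Ioi (fun r : ℝ => ENNReal.ofReal (r ^ k) * f r)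

section AddHaar

variable {E : Type*} [NormedAddCommGroup E] [NormedSpace ℝ E] [MeasurableSpace E] [BorelSpace E]
  [FiniteDimensional ℝ E] [Nontrivial E] (μ : Measure E) [μ.IsAddHaarMeasure]

lemma lintegral_angular_mul_radial {f : E → ENNReal} {χ : ℝ → ENNReal} (hf : Measurable f)
    (hχ : Measurable χ) :
    ∫⁻ x, f (‖x‖⁻¹ • x) * χ ‖x‖ ∂μ =
      (∫⁻ ω, f (ω : E) ∂μ.toSphere) *
        ∫⁻ r in Set.Ioi (0 : ℝ), ENNReal.ofReal (r ^ (Module.finrank ℝ E - 1)) * χ r := by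
  calc ∫⁻ x, f (‖x‖⁻¹ • x) * χ ‖x‖ ∂μ
      = ∫⁻ x : ({0}ᶜ : Set E), f (‖(x : E)‖⁻¹ • (x : E)) * χ ‖(x : E)‖ ∂(μ.comap (↑)) := by
        rw [lintegral_subtype_comap (measurableSet_singleton _).compl
          (fun x => f (‖x‖⁻¹ • x) * χ ‖x‖), restrict_compl_singleton]
    _ = ∫⁻ p : sphere (0 : E) 1 × Set.Ioi (0 : ℝ), f p.1 * χ p.2
          ∂(μ.toSphere.prod (Measure.volumeIoiPow (Module.finrank ℝ E - 1))) := by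
        rw [← μ.measurePreserving_homeomorphUnitSphereProd.lintegral_comp_emb
          (Homeomorph.measurableEmbedding _)]
        simp only [homeomorphUnitSphereProd_apply_fst_coe, homeomorphUnitSphereProd_apply_snd_coe]
    _ = _ := by
        rw [lintegral_prod_mul (f := fun ω : sphere (0 : E) 1 => f ω)
          (g := fun r : Set.Ioi (0 : ℝ) => χ r) (by fun_prop) (by fun_prop),
          lintegral_volumeIoiPow _ hχ]

lemma lintegral_radial {χ : ℝ → ENNReal} (hχ : Measurable χ) :
    ∫⁻ x, χ ‖x‖ ∂μ = μ.toSphere Set.univ *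
      ∫⁻ r in Set.Ioi (0 : ℝ), ENNReal.ofReal (r ^ (Module.finrank ℝ E - 1)) * χ r := by
  simpa using lintegral_angular_mul_radial μ (f := 1) measurable_one hχ

end AddHaar

lemma exists_radial_weight (k : ℕ) :
    ∃ χ : ℝ → ENNReal, Measurable χ ∧
      ∫⁻ r in Set.Ioi (0 : ℝ), ENNReal.ofReal (r ^ k) * χ r = 1 := by
  refine ⟨(Set.Ioo 0 1).indicator fun r => ENNReal.ofReal ((r ^ k)⁻¹),
    Measurable.indicator (by fun_prop) measurableSet_Ioo, ?_⟩
  have hprod : Set.EqOn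
      (fun r : ℝ => ENNReal.ofReal (r ^ k) *
        (Set.Ioo 0 1).indicator (fun r => ENNReal.ofReal ((r ^ k)⁻¹)) r)
      ((Set.Ioo 0 1).indicator 1) (Set.Ioi 0) := by
    intro r (hr : 0 < r)
    by_cases hr1 : r < 1
    · simp only [Set.mem_Ioo, hr, hr1, and_self, Set.indicator_of_mem, Pi.one_apply]
      rw [← ENNReal.ofReal_mul (by positivity), mul_inv_cancel₀ (by positivity),
        ENNReal.ofReal_one]
    · simp [hr1]
  rw [setLIntegral_congr_fun measurableSet_Ioi hprod, lintegral_indicator_one measurableSet_Ioo,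
    Measure.restrict_apply measurableSet_Ioo, Set.inter_eq_left.2 Set.Ioo_subset_Ioi_self,
    Real.volume_Ioo, sub_zero, ENNReal.ofReal_one]

lemma polarCoord_symm_preimage_upperHalfPlane :
    polarCoord.symm ⁻¹' (Set.univ ×ˢ Set.Ioi (0 : ℝ)) ∩ polarCoord.target =
      Set.Ioi (0 : ℝ) ×ˢ Set.Ioo 0 π := by
  ext ⟨r, φ⟩
  simp only [polarCoord_target, polarCoord_symm_apply, Set.mem_inter_iff, Set.mem_preimage,
    Set.mem_prod, Set.mem_univ, true_and, Set.mem_Ioi, Set.mem_Ioo]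
  constructor
  · rintro ⟨hsin, hr, hπφ, hφπ⟩
    refine ⟨hr, ?_, hφπ⟩
    by_contra! hφ
    exact (sin_nonpos_of_nonpos_of_neg_pi_le hφ hπφ.le).not_gt (pos_of_mul_pos_right hsin hr.le)
  · rintro ⟨hr, hφ, hφπ⟩
    exact ⟨mul_pos hr (sin_pos_of_pos_of_lt_pi hφ hφπ), hr, by linarith [pi_pos], hφπ⟩

lemma lintegral_upperHalfPlane_eq_polar {F : ℝ × ℝ → ENNReal} (hF : Measurable F) :
    ∫⁻ t, ∫⁻ s in Set.Ioi (0 : ℝ), F (t, s) =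
      ∫⁻ r in Set.Ioi (0 : ℝ), ∫⁻ φ in Set.Ioo 0 π,
        ENNReal.ofReal r * F (r * cos φ, r * sin φ) := by
  have hpolar : Measurable fun p : ℝ × ℝ =>
      ENNReal.ofReal p.1 * F (p.1 * cos p.2, p.1 * sin p.2) :=
    (by fun_prop : Measurable fun p : ℝ × ℝ => ENNReal.ofReal p.1).mul (hF.comp (by fun_prop))
  have hmeas : MeasurableSet (polarCoord.symm ⁻¹' (Set.univ ×ˢ Set.Ioi (0 : ℝ))) :=
    continuous_polarCoord_symm.measurable (MeasurableSet.univ.prod measurableSet_Ioi)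
  calc ∫⁻ t, ∫⁻ s in Set.Ioi (0 : ℝ), F (t, s)
      = ∫⁻ p in Set.univ ×ˢ Set.Ioi (0 : ℝ), F p := by
        rw [Measure.volume_eq_prod, setLIntegral_prod _ hF.aemeasurable, setLIntegral_univ]
    _ = ∫⁻ p in Set.Ioi (0 : ℝ) ×ˢ Set.Ioo 0 π,
          ENNReal.ofReal p.1 * F (p.1 * cos p.2, p.1 * sin p.2) := by
        rw [← lintegral_indicator (MeasurableSet.univ.prod measurableSet_Ioi),
          ← lintegral_comp_polarCoord_symm, ← polarCoord_symm_preimage_upperHalfPlane,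
          ← Measure.restrict_restrict hmeas, ← lintegral_indicator hmeas]
        congr 1 with p
        by_cases hp : polarCoord.symm p ∈ (Set.univ ×ˢ Set.Ioi (0 : ℝ) : Set (ℝ × ℝ))
        · rw [Set.indicator_of_mem hp, Set.indicator_of_mem (Set.mem_preimage.2 hp),
            polarCoord_symm_apply, smul_eq_mul]
        · rw [Set.indicator_of_notMem hp, Set.indicator_of_notMem (mt Set.mem_preimage.1 hp),
            smul_zero]
    _ = _ := by
        rw [Measure.volume_eq_prod, setLIntegral_prod _ hpolar.aemeasurable]

end PolarCoordinates

section ZonalIntegrals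

lemma lintegral_coord_zero_norm (m : ℕ) {G : ℝ × ℝ → ENNReal} (hG : Measurable G) :
    ∫⁻ x : Eu (m + 1), G (x 0, ‖x‖) =
      ∫⁻ t, ∫⁻ z : Eu m, G (t, √(t ^ 2 + ‖z‖ ^ 2)) := by
  rw [← (PiLp.volume_preserving_toLp (Fin (m + 1))).lintegral_comp_emb
      (MeasurableEquiv.toLp 2 _).measurableEmbedding,
    ← (volume_preserving_piFinSuccAbove (fun _ : Fin (m + 1) => ℝ) 0).symm.lintegral_comp_emb
      (MeasurableEquiv.measurableEmbedding _),
    Measure.volume_eq_prod, lintegral_prod]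
  · congr 1 with t
    rw [← (PiLp.volume_preserving_toLp (Fin m)).lintegral_comp_emb
      (MeasurableEquiv.toLp 2 _).measurableEmbedding]
    congr 1 with z
    rw [EuclideanSpace.norm_eq, EuclideanSpace.norm_eq, Fin.sum_univ_succ,
      Real.sq_sqrt (by positivity)]
    simp [MeasurableEquiv.piFinSuccAbove, Fin.insertNthEquiv]
  · have hcomp : Measurable fun x : Eu (m + 1) => G (x 0, ‖x‖) := hG.comp (by fun_prop)
    exact ((hcomp.comp (MeasurableEquiv.toLp 2 _).measurable).comp
      (MeasurableEquiv.measurable _)).aemeasurable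

lemma lintegral_inner_norm_eq_coord_norm {n : ℕ} (i : Fin n) {e : Eu n} (he : ‖e‖ = 1)
    (G : ℝ × ℝ → ENNReal) :
    ∫⁻ x : Eu n, G (⟪x, e⟫, ‖x‖) = ∫⁻ x : Eu n, G (x i, ‖x‖) := by
  set ρ := (Submodule.span ℝ {e - EuclideanSpace.single i 1})ᗮ.reflection
  have hρe : ρ e = EuclideanSpace.single i 1 := Submodule.reflection_sub (by simp [he])
  rw [← ρ.measurePreserving.lintegral_comp_emb ρ.toHomeomorph.measurableEmbedding
    (fun x => G (x i, ‖x‖))]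
  congr 1 with x
  rw [ρ.norm_map, ← ρ.inner_map_map, hρe, EuclideanSpace.inner_single_right]
  simp

variable {m : ℕ} {e : Eu (m + 2)}

lemma lintegral_inner_norm (he : ‖e‖ = 1) {G : ℝ × ℝ → ENNReal} (hG : Measurable G) :
    ∫⁻ x : Eu (m + 2), G (⟪x, e⟫, ‖x‖) =
      ENNReal.ofReal (sphereArea (m + 1)) *
        ∫⁻ r in Set.Ioi (0 : ℝ), ∫⁻ φ in Set.Ioo 0 π,
          ENNReal.ofReal (r ^ (m + 1) * sin φ ^ m) * G (r * cos φ, r) := by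
  have hshell : Measurable fun p : ℝ × ℝ => G (p.1, √(p.1 ^ 2 + p.2 ^ 2)) :=
    hG.comp (by fun_prop)
  have hslice (t : ℝ) : ∫⁻ z : Eu (m + 1), G (t, √(t ^ 2 + ‖z‖ ^ 2)) =
      ENNReal.ofReal (sphereArea (m + 1)) *
        ∫⁻ s in Set.Ioi (0 : ℝ), ENNReal.ofReal (s ^ m) * G (t, √(t ^ 2 + s ^ 2)) := by
    rw [lintegral_radial volume (χ := fun s => G (t, √(t ^ 2 + s ^ 2))) (hG.comp (by fun_prop)),
      toSphere_univ_eq_sphereArea m.succ_pos, finrank_euclideanSpace_fin, Nat.add_sub_cancel]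
  have hweight : Measurable fun p : ℝ × ℝ =>
      ENNReal.ofReal (p.2 ^ m) * G (p.1, √(p.1 ^ 2 + p.2 ^ 2)) :=
    (by fun_prop : Measurable fun p : ℝ × ℝ => ENNReal.ofReal (p.2 ^ m)).mul hshell
  rw [lintegral_inner_norm_eq_coord_norm 0 he, lintegral_coord_zero_norm _ hG]
  simp only [hslice]
  rw [lintegral_const_mul' _ _ ENNReal.ofReal_ne_top, lintegral_upperHalfPlane_eq_polar hweight]
  congr 1
  refine setLIntegral_congr_fun measurableSet_Ioi fun r (hr : 0 < r) => ?_
  refine setLIntegral_congr_fun measurableSet_Ioo fun φ _ => ?_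
  have hnorm : √((r * cos φ) ^ 2 + (r * sin φ) ^ 2) = r := by
    rw [show (r * cos φ) ^ 2 + (r * sin φ) ^ 2 = r ^ 2 by
      linear_combination r ^ 2 * sin_sq_add_cos_sq φ, Real.sqrt_sq hr.le]
  simp only [hnorm]
  rw [← mul_assoc, ← ENNReal.ofReal_mul hr.le]
  ring_nf

lemma lintegral_toSphere_inner (he : ‖e‖ = 1) {f : ℝ → ENNReal} (hf : Measurable f) :
    ∫⁻ ω, f ⟪(ω : Eu (m + 2)), e⟫ ∂(volume : Measure (Eu (m + 2))).toSphere =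
      ENNReal.ofReal (sphereArea (m + 1)) *
        ∫⁻ φ in Set.Ioo 0 π, ENNReal.ofReal (sin φ ^ m) * f (cos φ) := by
  -- Evaluate `∫ f (⟪x, e⟫ / ‖x‖) * χ ‖x‖` over the whole space in two ways, with `χ` chosen so that
  -- the radial factor is `1` in both.
  obtain ⟨χ, hχ, hχ_one⟩ := exists_radial_weight (m + 1)
  have hsphere := lintegral_angular_mul_radial (volume : Measure (Eu (m + 2)))
    (f := fun x => f ⟪x, e⟫) (by fun_prop) hχ
  rw [finrank_euclideanSpace_fin, show m + 2 - 1 = m + 1 from rfl, hχ_one, mul_one] at hsphere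
  have hG : Measurable fun p : ℝ × ℝ => f (p.2⁻¹ * p.1) * χ p.2 := by fun_prop
  have hintegrand : Set.EqOn
      (fun r => ∫⁻ φ in Set.Ioo 0 π,
        ENNReal.ofReal (r ^ (m + 1) * sin φ ^ m) * (f (r⁻¹ * (r * cos φ)) * χ r))
      (fun r => ENNReal.ofReal (r ^ (m + 1)) * χ r *
        ∫⁻ φ in Set.Ioo 0 π, ENNReal.ofReal (sin φ ^ m) * f (cos φ)) (Set.Ioi 0) := by
    intro r (hr : 0 < r)
    simp only
    rw [← lintegral_const_mul _ (by fun_prop)]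
    congr 1 with φ
    rw [inv_mul_cancel_left₀ hr.ne', ENNReal.ofReal_mul (by positivity)]
    ring
  simp only [real_inner_smul_left] at hsphere
  rw [← hsphere, lintegral_inner_norm he hG, setLIntegral_congr_fun measurableSet_Ioi hintegrand,
    lintegral_mul_const _ (by fun_prop), hχ_one, one_mul]

lemma integral_toSphere_inner (he : ‖e‖ = 1) {f : ℝ → ℝ} (hf : Measurable f)
    (hf_nonneg : ∀ t, 0 ≤ f t) :
    ∫ ω, f ⟪(ω : Eu (m + 2)), e⟫ ∂(volume : Measure (Eu (m + 2))).toSphere =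
      sphereArea (m + 1) * ∫ φ in Set.Ioo 0 π, sin φ ^ m * f (cos φ) := by
  have hsin {φ : ℝ} (hφ : φ ∈ Set.Ioo 0 π) : 0 ≤ sin φ ^ m :=
    pow_nonneg (sin_pos_of_pos_of_lt_pi hφ.1 hφ.2).le m
  have hnonneg : 0 ≤ᵐ[volume.restrict (Set.Ioo 0 π)] fun φ => sin φ ^ m * f (cos φ) := by
    filter_upwards [ae_restrict_mem measurableSet_Ioo] with φ hφ
    exact mul_nonneg (hsin hφ) (hf_nonneg _)
  rw [integral_eq_lintegral_of_nonneg_ae (ae_of_all _ fun _ => hf_nonneg _)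
      (Measurable.aestronglyMeasurable (by fun_prop)),
    lintegral_toSphere_inner he (f := fun t => ENNReal.ofReal (f t)) (by fun_prop),
    ENNReal.toReal_mul, ENNReal.toReal_ofReal (sphereArea_pos m.succ_pos).le,
    integral_eq_lintegral_of_nonneg_ae hnonneg (Measurable.aestronglyMeasurable (by fun_prop))]
  congr 2
  exact setLIntegral_congr_fun measurableSet_Ioo fun φ hφ => (ENNReal.ofReal_mul (hsin hφ)).symm

end ZonalIntegrals

section TangentSubstitution

lemma image_two_mul_arctan_mul_tan {k : ℝ} (hk : 0 < k) :
    (fun θ => 2 * arctan (k * tan θ)) '' Set.Ioo 0 (π / 2) = Set.Ioo 0 π := by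
  ext φ
  constructor
  · rintro ⟨θ, hθ, rfl⟩
    have htan := tan_pos_of_pos_of_lt_pi_div_two hθ.1 hθ.2
    have hpos : 0 < arctan (k * tan θ) := arctan_pos.2 (by positivity)
    have hlt := arctan_lt_pi_div_two (k * tan θ)
    exact ⟨by linarith, by linarith⟩
  · rintro ⟨hφ, hφπ⟩
    have htan := tan_pos_of_pos_of_lt_pi_div_two (x := φ / 2) (by linarith) (by linarith)
    refine ⟨arctan (tan (φ / 2) / k), ⟨arctan_pos.2 (by positivity), arctan_lt_pi_div_two _⟩, ?_⟩
    simp only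
    rw [tan_arctan, mul_div_cancel₀ _ hk.ne', arctan_tan (by linarith) (by linarith)]
    ring

lemma hasDerivAt_two_mul_arctan_mul_tan (k : ℝ) {θ : ℝ} (hθ : cos θ ≠ 0) :
    HasDerivAt (fun θ => 2 * arctan (k * tan θ))
      (2 * k * (1 + tan θ ^ 2) / (1 + (k * tan θ) ^ 2)) θ := by
  refine (((hasDerivAt_tan hθ).const_mul k).arctan.const_mul 2).congr_deriv ?_
  rw [← inv_one_add_tan_sq hθ]
  field_simp

lemma integral_Ioo_zero_pi_eq_tan_substitution {k : ℝ} (hk : 0 < k) (h : ℝ → ℝ) :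
    ∫ φ in Set.Ioo 0 π, h φ = ∫ θ in Set.Ioo 0 (π / 2),
      (2 * k * (1 + tan θ ^ 2) / (1 + (k * tan θ) ^ 2)) * h (2 * arctan (k * tan θ)) := by
  have hsub : Set.Ioo 0 (π / 2) ⊆ Set.Ioo (-(π / 2)) (π / 2) :=
    Set.Ioo_subset_Ioo_left (by linarith [pi_pos])
  have hinj : Set.InjOn (fun θ => 2 * arctan (k * tan θ)) (Set.Ioo 0 (π / 2)) := by
    intro a ha b hb hab
    have harctan := arctan_injective (mul_left_cancel₀ (two_ne_zero' ℝ) hab)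
    exact injOn_tan (hsub ha) (hsub hb) (mul_left_cancel₀ hk.ne' harctan)
  rw [← image_two_mul_arctan_mul_tan hk,
    integral_image_eq_integral_abs_deriv_smul measurableSet_Ioo (fun θ hθ =>
      (hasDerivAt_two_mul_arctan_mul_tan k
        (cos_pos_of_mem_Ioo (hsub hθ)).ne').hasDerivWithinAt) hinj]
  refine setIntegral_congr_fun measurableSet_Ioo fun θ _ => ?_
  simp only [smul_eq_mul]
  rw [abs_of_nonneg (by positivity)]

lemma cos_two_mul_arctan (t : ℝ) : cos (2 * arctan t) = 2 / (1 + t ^ 2) - 1 := by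
  rw [cos_two_mul, cos_sq_arctan]
  ring

lemma sin_two_mul_arctan (t : ℝ) : sin (2 * arctan t) = 2 * t / (1 + t ^ 2) := by
  rw [sin_eq_two_mul_tan_half_div_one_add_tan_half_sq, mul_div_cancel_left₀ _ two_ne_zero,
    tan_arctan]

end TangentSubstitution

section Duality

variable {α E : Type*} [MeasurableSpace α] {μ : Measure α} [NormedAddCommGroup E]
  [InnerProductSpace ℝ E]

lemma inner_inv_norm_smul_self (v : E) : ⟪v, ‖v‖⁻¹ • v⟫ = ‖v‖ := by
  rw [real_inner_smul_right, real_inner_self_eq_norm_mul_norm, ← mul_assoc]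
  exact inv_mul_mul_self ‖v‖

lemma isLeast_integral_norm [MeasurableSpace E] [BorelSpace E] [SecondCountableTopology E]
    {K : α → E} (hK : Measurable K) (hK_int : Integrable K μ) :
    IsLeast {c : ℝ | ∀ g : α → E, Measurable g → (∀ᵐ y ∂μ, ‖g y‖ ≤ 1) →
        |∫ y, ⟪K y, g y⟫ ∂μ| ≤ c}
      (∫ y, ‖K y‖ ∂μ) := by
  constructor
  · intro g _ hg
    rw [← Real.norm_eq_abs]
    refine norm_integral_le_of_norm_le hK_int.norm ?_
    filter_upwards [hg] with y hy
    exact (norm_inner_le_norm _ _).trans (mul_le_of_le_one_right (norm_nonneg _) hy)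
  · intro c hc
    have hunit (y : α) : ‖‖K y‖⁻¹ • K y‖ ≤ 1 := by
      rw [norm_smul, norm_inv, norm_norm]
      exact inv_mul_le_one
    have hle := hc _ (hK.norm.inv.smul hK) (ae_of_all _ hunit)
    simp only [Pi.smul_apply', Pi.inv_apply, inner_inv_norm_smul_self] at hle
    exact (le_abs_self _).trans hle

end Duality

section ParametricIntegrals

lemma exists_eventually_forall_norm_le {X Y E : Type*} [TopologicalSpace X] [TopologicalSpace Y]
    [CompactSpace Y] [SeminormedAddCommGroup E] {f : X → Y → E} {x : X}
    (hf : ∀ y, ContinuousAt (Function.uncurry f) (x, y)) :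
    ∃ C, ∀ᶠ z in 𝓝 x, ∀ y, ‖f z y‖ ≤ C := by
  have hfx : Continuous (f x) :=
    continuous_iff_continuousAt.2 fun y => (hf y).comp (f := fun y => (x, y)) (by fun_prop)
  obtain ⟨C, hC⟩ := isCompact_univ.exists_bound_of_continuousOn hfx.continuousOn
  refine ⟨C + 1, ?_⟩
  have hlocal : ∀ y ∈ Set.univ, ∀ᶠ p : X × Y in 𝓝 (x, y), ‖f p.1 p.2‖ ≤ C + 1 := fun y _ =>
    ((hf y).norm.eventually_lt_const ((hC y trivial).trans_lt (lt_add_one C))).mono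
      fun _ h => h.le
  simpa using isCompact_univ.eventually_forall_of_forall_eventually hlocal

variable {Y E F : Type*} [TopologicalSpace Y] [CompactSpace Y] [SecondCountableTopology Y]
  [MeasurableSpace Y] [OpensMeasurableSpace Y] {μ : Measure Y}
  [NormedAddCommGroup E] [NormedSpace ℝ E] [NormedAddCommGroup F] [NormedSpace ℝ F] {g : Y → F}

lemma integrable_smulRight {L : Y → E →L[ℝ] ℝ} (hL : Continuous L) (hg : Integrable g μ) :
    Integrable (fun y => (L y).smulRight (g y)) μ := by
  obtain ⟨C, hC⟩ := isCompact_univ.exists_bound_of_continuousOn hL.continuousOn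
  refine (hg.norm.const_mul C).mono'
    ((ContinuousLinearMap.smulRightL ℝ E F).aestronglyMeasurable_comp₂
      hL.aestronglyMeasurable hg.aestronglyMeasurable) (ae_of_all _ fun y => ?_)
  rw [ContinuousLinearMap.norm_smulRight_apply]
  gcongr
  exact hC y trivial

lemma hasFDerivAt_integral_smul {k : E → Y → ℝ} {k' : E → Y → E →L[ℝ] ℝ} {x : E}
    (hk : ∀ᶠ z in 𝓝 x, Continuous (k z))
    (hk' : ∀ᶠ z in 𝓝 x, ∀ y, HasFDerivAt (k · y) (k' z y) z)
    (hk'_cont : ∀ y, ContinuousAt (Function.uncurry k') (x, y)) (hg : Integrable g μ) :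
    HasFDerivAt (fun z => ∫ y, k z y • g y ∂μ) (∫ y, (k' x y).smulRight (g y) ∂μ) x := by
  obtain ⟨C, hC⟩ := exists_eventually_forall_norm_le hk'_cont
  obtain ⟨B, hB⟩ := isCompact_univ.exists_bound_of_continuousOn hk.self_of_nhds.continuousOn
  have hk'x : Continuous (k' x) := continuous_iff_continuousAt.2 fun y =>
    (hk'_cont y).comp (f := fun y => (x, y)) (by fun_prop)
  refine hasFDerivAt_integral_of_dominated_of_fderiv_le (F := fun z y => k z y • g y)
    (F' := fun z y => (k' z y).smulRight (g y)) (hC.and hk')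
    (hk.mono fun z hz => hz.aestronglyMeasurable.smul hg.aestronglyMeasurable)
    (hg.bdd_smul B hk.self_of_nhds.aestronglyMeasurable (ae_of_all _ fun y => hB y trivial))
    (integrable_smulRight hk'x hg).aestronglyMeasurable
    (ae_of_all _ fun y z hz => ?_) (hg.norm.const_mul C)
    (ae_of_all _ fun y z hz => (hz.2 y).smul_const (g y))
  rw [ContinuousLinearMap.norm_smulRight_apply]
  gcongr
  exact hz.1 y

end ParametricIntegrals

section Divergence

variable {n : ℕ}

lemma divg_eq_trace {u : Eu n → Eu n} {L : Eu n →L[ℝ] Eu n} {x : Eu n}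
    (hu : HasFDerivAt u L x) : divg u x = LinearMap.trace ℝ (Eu n) L := by
  rw [LinearMap.trace_eq_sum_inner _ (EuclideanSpace.basisFun (Fin n) ℝ), divg]
  refine Finset.sum_congr rfl fun j _ => ?_
  have hcoord : HasFDerivAt (fun y => u y j) ((EuclideanSpace.proj j).comp L) x :=
    (EuclideanSpace.proj j : Eu n →L[ℝ] ℝ).hasFDerivAt.comp x hu
  simp [hcoord.fderiv, EuclideanSpace.inner_single_left]

lemma trace_integral {α E : Type*} [MeasurableSpace α] {μ : Measure α} [NormedAddCommGroup E]
    [NormedSpace ℝ E] [FiniteDimensional ℝ E] {Φ : α → E →L[ℝ] E} (hΦ : Integrable Φ μ) :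
    LinearMap.trace ℝ E (∫ y, Φ y ∂μ : E →L[ℝ] E) = ∫ y, LinearMap.trace ℝ E (Φ y) ∂μ :=
  ((LinearMap.trace ℝ E ∘ₗ ContinuousLinearMap.coeLM ℝ).toContinuousLinearMap.integral_comp_comm
    hΦ).symm

end Divergence

section PoissonKernel

variable {E : Type*} [NormedAddCommGroup E] {R : ℝ} {z : E}

lemma ne_of_mem_sphere_of_mem_ball (y : sphere (0 : E) R) (hz : z ∈ ball (0 : E) R) :
    (y : E) ≠ z := by
  rintro rfl
  exact (mem_ball_zero_iff.1 hz).ne (mem_sphere_zero_iff_norm.1 y.2)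

lemma continuous_poissonKernel (n : ℕ) (hz : z ∈ ball (0 : E) R) :
    Continuous fun y : sphere (0 : E) R => (R ^ 2 - ‖z‖ ^ 2) / ‖(y : E) - z‖ ^ n :=
  continuous_const.div (by fun_prop) fun y =>
    pow_ne_zero n (norm_sub_pos_iff.2 (ne_of_mem_sphere_of_mem_ball y hz)).ne'

end PoissonKernel

section PoissonGradient

variable {E : Type*} [NormedAddCommGroup E] [InnerProductSpace ℝ E]

lemma hasFDerivAt_norm_zpow (p : ℤ) {x : E} (hx : x ≠ 0) :
    HasFDerivAt (fun z : E => ‖z‖ ^ p) ((p * ‖x‖ ^ (p - 2)) • innerSL ℝ x) x := by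
  have hnorm : ‖x‖ ≠ 0 := norm_ne_zero_iff.2 hx
  have hsqrt : HasFDerivAt (fun z : E => √(‖z‖ ^ 2)) _ x :=
    (hasStrictFDerivAt_norm_sq x).hasFDerivAt.sqrt (pow_ne_zero 2 hnorm)
  simp only [Real.sqrt_sq (norm_nonneg _)] at hsqrt
  refine ((hasDerivAt_zpow p ‖x‖ (Or.inl hnorm)).comp_hasFDerivAt x hsqrt).congr_fderiv ?_
  ext w
  rw [show p - 2 = p - 1 - 1 by ring, zpow_sub_one₀ hnorm (p - 1)]
  simp only [smul_apply, nsmul_eq_mul, smul_eq_mul, innerSL_apply_apply, Nat.cast_ofNat]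
  field_simp

/-- The gradient with respect to `z` of the unnormalised Poisson kernel
`(R ^ 2 - ‖z‖ ^ 2) / ‖y - z‖ ^ n`. The exponent `n` is not tied to the dimension of the space. -/
def poissonGradient (n : ℕ) (R : ℝ) (z y : E) : E :=
  (-2 / ‖y - z‖ ^ n) • z + (n * (R ^ 2 - ‖z‖ ^ 2) / ‖y - z‖ ^ (n + 2)) • (y - z)

variable {n : ℕ} {R : ℝ} {y z : E}

lemma hasFDerivAt_poissonKernel (n : ℕ) (R : ℝ) (hyz : y ≠ z) :
    HasFDerivAt (fun z : E => (R ^ 2 - ‖z‖ ^ 2) / ‖y - z‖ ^ n)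
      (innerSL ℝ (poissonGradient n R z y)) z := by
  have hnum : HasFDerivAt (fun z : E => R ^ 2 - ‖z‖ ^ 2) (-(2 • innerSL ℝ z)) z :=
    (hasStrictFDerivAt_norm_sq z).hasFDerivAt.const_sub (R ^ 2)
  have hden : HasFDerivAt (fun z : E => ‖y - z‖ ^ (-n : ℤ)) _ z :=
    (hasFDerivAt_norm_zpow (-n) (sub_ne_zero.2 hyz)).comp z ((hasFDerivAt_id z).const_sub y)
  have hkernel := hnum.mul hden
  simp only [zpow_neg, zpow_natCast] at hkernel
  refine hkernel.congr_fderiv ?_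
  have hpow : ‖y - z‖ ^ (-(n : ℤ) - 2) = (‖y - z‖ ^ (n + 2))⁻¹ := by
    rw [← zpow_natCast, ← zpow_neg]
    congr 1
    push_cast
    ring
  ext w
  simp only [Int.cast_neg, Int.cast_natCast, hpow, neg_mul, map_sub, neg_smul,
    ContinuousLinearMap.comp_neg, ContinuousLinearMap.comp_id, neg_neg, smul_neg, add_apply,
    smul_apply, sub_apply, coe_innerSL_apply, smul_eq_mul, neg_apply, nsmul_eq_mul,
    Nat.cast_ofNat, poissonGradient, map_add, map_smul]
  ring

lemma norm_poissonGradient (hy : ‖y‖ = R) (hyz : y ≠ z) :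
    ‖poissonGradient n R z y‖ =
      √(4 * ‖z‖ ^ 2 + 2 * n * (R ^ 2 - ‖z‖ ^ 2) +
          n * (n - 2) * (R ^ 2 - ‖z‖ ^ 2) ^ 2 / ‖y - z‖ ^ 2) / ‖y - z‖ ^ n := by
  have hdist : 0 < ‖y - z‖ := norm_sub_pos_iff.2 hyz
  have hinner : ⟪z, y - z⟫ = (R ^ 2 - ‖z‖ ^ 2 - ‖y - z‖ ^ 2) / 2 := by
    have hsum := norm_add_sq_real z (y - z)
    rw [add_sub_cancel, hy] at hsum
    linarith
  have hfactor : poissonGradient n R z y = (‖y - z‖ ^ n)⁻¹ •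
      ((-2 : ℝ) • z + (n * (R ^ 2 - ‖z‖ ^ 2) / ‖y - z‖ ^ 2) • (y - z)) := by
    rw [poissonGradient, smul_add, smul_smul, smul_smul]
    congr 2
    · field_simp
    · field_simp
      ring
  rw [hfactor, norm_smul, norm_inv, norm_pow, norm_norm, inv_mul_eq_div,
    ← Real.sqrt_sq (norm_nonneg (_ + _))]
  congr 2
  rw [norm_add_sq_real, norm_smul, norm_smul, real_inner_smul_left, real_inner_smul_right, hinner,
    mul_pow, mul_pow, Real.norm_eq_abs, Real.norm_eq_abs, sq_abs, sq_abs]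
  field_simp
  ring

lemma continuousAt_poissonGradient (n : ℕ) (y : sphere (0 : E) R) (hz : z ∈ ball (0 : E) R) :
    ContinuousAt (fun p : E × sphere (0 : E) R => poissonGradient n R p.1 p.2) (z, y) := by
  have hdist : ‖(y : E) - z‖ ≠ 0 := (norm_sub_pos_iff.2 (ne_of_mem_sphere_of_mem_ball y hz)).ne'
  have hval : Continuous fun p : E × sphere (0 : E) R => (p.2 : E) := by fun_prop
  have hpow (k : ℕ) :
      ContinuousAt (fun p : E × sphere (0 : E) R => ‖(p.2 : E) - p.1‖ ^ k) (z, y) :=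
    ((hval.sub continuous_fst).norm.pow k).continuousAt
  exact ((continuousAt_const.div (hpow n) (pow_ne_zero n hdist)).smul continuousAt_fst).add
    ((ContinuousAt.div (by fun_prop) (hpow (n + 2)) (pow_ne_zero (n + 2) hdist)).smul
      (hval.sub continuous_fst).continuousAt)

lemma continuous_poissonGradient (n : ℕ) (hz : z ∈ ball (0 : E) R) :
    Continuous fun y : sphere (0 : E) R => poissonGradient n R z y :=
  continuous_iff_continuousAt.2 fun y => (continuousAt_poissonGradient n y hz).comp
    (f := fun y => (z, y)) (by fun_prop)

end PoissonGradient

section RadialProfile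

/-- The length of `poissonGradient n R x y` for `‖y‖ = R`, as a function of `ρ = ‖x‖` and of the
cosine `t` of the angle between `x` and `y`; here `R ^ 2 + ρ ^ 2 - 2 * R * ρ * t = ‖y - x‖ ^ 2`. -/
def poissonGradientProfile (n : ℕ) (R ρ t : ℝ) : ℝ :=
  √(4 * ρ ^ 2 + 2 * n * (R ^ 2 - ρ ^ 2) +
      n * (n - 2) * (R ^ 2 - ρ ^ 2) ^ 2 / (R ^ 2 + ρ ^ 2 - 2 * R * ρ * t)) /
    √(R ^ 2 + ρ ^ 2 - 2 * R * ρ * t) ^ n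

lemma measurable_poissonGradientProfile (n : ℕ) (R ρ : ℝ) :
    Measurable (poissonGradientProfile n R ρ) := by
  unfold poissonGradientProfile
  fun_prop

lemma poissonGradientProfile_nonneg (n : ℕ) (R ρ t : ℝ) : 0 ≤ poissonGradientProfile n R ρ t := by
  unfold poissonGradientProfile
  positivity

variable {R ρ θ : ℝ}

lemma norm_poissonGradient_eq_profile {E : Type*} [NormedAddCommGroup E] [InnerProductSpace ℝ E]
    {n : ℕ} {x y : E} (hy : ‖y‖ = R) (hyx : y ≠ x) {t : ℝ} (ht : ⟪y, x⟫ = R * ‖x‖ * t) :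
    ‖poissonGradient n R x y‖ = poissonGradientProfile n R ‖x‖ t := by
  have hdist : R ^ 2 + ‖x‖ ^ 2 - 2 * R * ‖x‖ * t = ‖y - x‖ ^ 2 := by
    rw [norm_sub_sq_real, hy, ht]
    ring
  rw [norm_poissonGradient hy hyx, poissonGradientProfile, hdist, Real.sqrt_sq (norm_nonneg _)]

lemma sq_dist_tan_substitution (hadd : R + ρ ≠ 0) (hθ : cos θ ≠ 0) :
    R ^ 2 + ρ ^ 2 - 2 * R * ρ * cos (2 * arctan ((R - ρ) / (R + ρ) * tan θ)) =
      ((R - ρ) / (cos θ * √(1 + ((R - ρ) / (R + ρ) * tan θ) ^ 2))) ^ 2 := by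
  have hV : 0 < 1 + ((R - ρ) / (R + ρ) * tan θ) ^ 2 := by positivity
  rw [cos_two_mul_arctan, div_pow, mul_pow (cos θ), Real.sq_sqrt hV.le, ← inv_one_add_tan_sq hθ]
  field_simp
  ring

lemma sq_cos_mul_tan_substitution (hadd : R + ρ ≠ 0) (hθ : cos θ ≠ 0) :
    (R + ρ) ^ 2 * (cos θ ^ 2 * (1 + ((R - ρ) / (R + ρ) * tan θ) ^ 2)) =
      (R - ρ) ^ 2 + 4 * R * ρ * cos θ ^ 2 := by
  rw [← inv_one_add_tan_sq hθ]
  field_simp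
  ring

lemma radicand_tan_substitution (a : ℝ) (hR : R ≠ 0) (hadd : R + ρ ≠ 0) (hsub : R - ρ ≠ 0)
    (hθ : cos θ ≠ 0) :
    4 * ρ ^ 2 + 2 * a * (R ^ 2 - ρ ^ 2) + a * (a - 2) * (R ^ 2 - ρ ^ 2) ^ 2 /
        ((R - ρ) / (cos θ * √(1 + ((R - ρ) / (R + ρ) * tan θ) ^ 2))) ^ 2 =
      R ^ 2 * ((a - (a - 2) * (ρ / R)) ^ 2 + 4 * a * (a - 2) * (ρ / R) * cos θ ^ 2) := by
  have hV : 0 < 1 + ((R - ρ) / (R + ρ) * tan θ) ^ 2 := by positivity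
  have hquot : (R ^ 2 - ρ ^ 2) ^ 2 /
      ((R - ρ) / (cos θ * √(1 + ((R - ρ) / (R + ρ) * tan θ) ^ 2))) ^ 2 =
        (R - ρ) ^ 2 + 4 * R * ρ * cos θ ^ 2 := by
    rw [← sq_cos_mul_tan_substitution hadd hθ, div_pow, mul_pow (cos θ), Real.sq_sqrt hV.le,
      sq_sub_sq, mul_pow]
    field_simp
  rw [mul_div_assoc, hquot]
  field_simp
  ring

lemma Qfun_add_two (m : ℕ) (hR : R ≠ 0) :
    Qfun (m + 2) θ (ρ / R) =
      √((((m + 2 : ℕ) : ℝ) - (((m + 2 : ℕ) : ℝ) - 2) * (ρ / R)) ^ 2 +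
          4 * ((m + 2 : ℕ) : ℝ) * (((m + 2 : ℕ) : ℝ) - 2) * (ρ / R) * cos θ ^ 2) /
        √(1 + ((R - ρ) / (R + ρ) * tan θ) ^ 2) ^ m := by
  have hk : (1 - ρ / R) / (1 + ρ / R) = (R - ρ) / (R + ρ) := by field_simp
  have hV : 0 ≤ 1 + ((R - ρ) / (R + ρ) * tan θ) ^ 2 := by positivity
  rw [Qfun, hk, ← mul_pow, Real.sqrt_eq_rpow (1 + _), ← Real.rpow_mul_natCast hV]
  congr 2
  push_cast
  ring

lemma poissonGradientProfile_tan_substitution (m : ℕ) (hρ : 0 ≤ ρ) (hρR : ρ < R)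
    (hθ : θ ∈ Set.Ioo 0 (π / 2)) :
    (2 * ((R - ρ) / (R + ρ)) * (1 + tan θ ^ 2) / (1 + ((R - ρ) / (R + ρ) * tan θ) ^ 2)) *
      (sin (2 * arctan ((R - ρ) / (R + ρ) * tan θ)) ^ m *
        poissonGradientProfile (m + 2) R ρ (cos (2 * arctan ((R - ρ) / (R + ρ) * tan θ)))) =
    (2 ^ (m + 1) * R / ((R + ρ) ^ (m + 1) * (R - ρ))) *
      (Qfun (m + 2) θ (ρ / R) * sin θ ^ m) := by
  have hR : 0 < R := hρ.trans_lt hρR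
  have hsub : 0 < R - ρ := sub_pos.2 hρR
  have hadd : 0 < R + ρ := by positivity
  have hcos : 0 < cos θ := cos_pos_of_mem_Ioo ⟨by linarith [hθ.1, pi_pos], hθ.2⟩
  have hsec : 1 + tan θ ^ 2 = (cos θ ^ 2)⁻¹ := by rw [← inv_one_add_tan_sq hcos.ne', inv_inv]
  rw [poissonGradientProfile, sq_dist_tan_substitution hadd.ne' hcos.ne',
    radicand_tan_substitution _ hR.ne' hadd.ne' hsub.ne' hcos.ne', sin_two_mul_arctan,
    Qfun_add_two m hR.ne', Real.sqrt_mul (by positivity), Real.sqrt_sq hR.le,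
    Real.sqrt_sq (by positivity), hsec, ← tan_mul_cos hcos.ne']
  generalize √((((m + 2 : ℕ) : ℝ) - _) ^ 2 + _) = q
  obtain ⟨v, hv, hvsq⟩ : ∃ v, 0 < v ∧ 1 + ((R - ρ) / (R + ρ) * tan θ) ^ 2 = v ^ 2 :=
    ⟨√(1 + ((R - ρ) / (R + ρ) * tan θ) ^ 2), by positivity, (Real.sq_sqrt (by positivity)).symm⟩
  rw [hvsq, Real.sqrt_sq hv.le]
  simp only [mul_pow, div_pow]
  field_simp
  ring

lemma integral_poissonGradientProfile (m : ℕ) (hρ : 0 ≤ ρ) (hρR : ρ < R) :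
    ∫ φ in Set.Ioo 0 π, sin φ ^ m * poissonGradientProfile (m + 2) R ρ (cos φ) =
      (2 ^ (m + 1) * R / ((R + ρ) ^ (m + 1) * (R - ρ))) *
        ∫ θ in (0 : ℝ)..(π / 2), Qfun (m + 2) θ (ρ / R) * sin θ ^ m := by
  have hk : 0 < (R - ρ) / (R + ρ) := div_pos (by linarith) (by linarith)
  rw [integral_Ioo_zero_pi_eq_tan_substitution hk,
    intervalIntegral.integral_of_le (by positivity), integral_Ioc_eq_integral_Ioo,
    ← integral_const_mul]
  exact setIntegral_congr_fun measurableSet_Ioo fun θ hθ =>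
    poissonGradientProfile_tan_substitution m hρ hρR hθ

end RadialProfile

section SphereMeasure

variable {n : ℕ} {R : ℝ} (hR : 0 < R)

lemma continuous_sphereScale : Continuous (sphereScale n R hR) :=
  Continuous.subtype_mk (by fun_prop) _

instance isFiniteMeasure_sphereMeasureR : IsFiniteMeasure (sphereMeasureR n R hR) := by
  have := Measure.smul_finite (volume : Measure (Eu n)).toSphere
    (ENNReal.ofReal_ne_top (r := R ^ (n - 1)))
  unfold sphereMeasureR
  infer_instance

lemma integral_sphereMeasureR {F : Type*} [NormedAddCommGroup F] [NormedSpace ℝ F]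
    {f : sphere (0 : Eu n) R → F} (hf : AEStronglyMeasurable f (sphereMeasureR n R hR)) :
    ∫ y, f y ∂sphereMeasureR n R hR =
      R ^ (n - 1) • ∫ ω, f (sphereScale n R hR ω) ∂(volume : Measure (Eu n)).toSphere := by
  rw [sphereMeasureR] at hf ⊢
  rw [integral_map (continuous_sphereScale hR).aemeasurable hf, integral_smul_measure,
    ENNReal.toReal_ofReal (by positivity)]

end SphereMeasure

lemma exists_norm_eq_one_and_eq_norm_smul {E : Type*} [NormedAddCommGroup E] [NormedSpace ℝ E]
    [Nontrivial E] (x : E) : ∃ e : E, ‖e‖ = 1 ∧ x = ‖x‖ • e := by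
  rcases eq_or_ne x 0 with rfl | hx
  · obtain ⟨e, he⟩ := exists_norm_eq E zero_le_one
    exact ⟨e, he, by simp⟩
  · exact ⟨‖x‖⁻¹ • x, norm_smul_inv_norm (𝕜 := ℝ) hx,
      (smul_inv_smul₀ (norm_ne_zero_iff.2 hx) x).symm⟩

section PoissonIntegral

variable {n : ℕ} {R : ℝ} (hR : 0 < R)

lemma divg_poissonBallRV {x : Eu n} (hx : x ∈ ball (0 : Eu n) R) {g : sphere (0 : Eu n) R → Eu n}
    (hg : Integrable g (sphereMeasureR n R hR)) :
    divg (poissonBallRV R hR g) x =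
      ∫ y, ⟪(1 / (sphereArea n * R)) • poissonGradient n R x y, g y⟫ ∂sphereMeasureR n R hR := by
  have hball : ∀ᶠ z in 𝓝 x, z ∈ ball (0 : Eu n) R := isOpen_ball.mem_nhds hx
  have hderiv := hasFDerivAt_integral_smul (E := Eu n)
    (k' := fun z (y : sphere (0 : Eu n) R) => innerSL ℝ (poissonGradient n R z y))
    (hball.mono fun z hz => continuous_poissonKernel n hz)
    (hball.mono fun z hz y => hasFDerivAt_poissonKernel n R (ne_of_mem_sphere_of_mem_ball y hz))
    (fun y => (innerSL ℝ).continuous.continuousAt.comp (continuousAt_poissonGradient n y hx)) hg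
  have hint := integrable_smulRight
    (L := fun y : sphere (0 : Eu n) R => innerSL ℝ (poissonGradient n R x y))
    ((innerSL ℝ).continuous.comp (continuous_poissonGradient n hx)) hg
  have hu : HasFDerivAt (poissonBallRV R hR g) _ x := hderiv.const_smul (1 / (sphereArea n * R))
  rw [divg_eq_trace hu, ContinuousLinearMap.toLinearMap_smul, map_smul,
    trace_integral hint, smul_eq_mul, ← integral_const_mul]
  congr 1 with y
  rw [real_inner_smul_left]
  congr 1
  exact LinearMap.trace_smulRight _ _

lemma integral_norm_poissonGradient_eq_TcoefR {m : ℕ} {x : Eu (m + 2)}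
    (hx : x ∈ ball (0 : Eu (m + 2)) R) :
    ∫ y, ‖(1 / (sphereArea (m + 2) * R)) • poissonGradient (m + 2) R x (y : Eu (m + 2))‖
      ∂sphereMeasureR (m + 2) R hR = TcoefR (m + 2) R ‖x‖ := by
  obtain ⟨e, he, hxe⟩ := exists_norm_eq_one_and_eq_norm_smul x
  have hprofile (ω : sphere (0 : Eu (m + 2)) 1) :
      ‖poissonGradient (m + 2) R x (sphereScale (m + 2) R hR ω : Eu (m + 2))‖ =
        poissonGradientProfile (m + 2) R ‖x‖ ⟪(ω : Eu (m + 2)), e⟫ := by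
    set y := sphereScale (m + 2) R hR ω with hy
    refine norm_poissonGradient_eq_profile (mem_sphere_zero_iff_norm.1 y.2)
      (ne_of_mem_sphere_of_mem_ball y hx) ?_
    rw [hy, sphereScale, real_inner_smul_left]
    nth_rw 1 [hxe]
    rw [real_inner_smul_right, mul_assoc]
  have harea : 0 < sphereArea (m + 2) := sphereArea_pos (by lia)
  simp only [norm_smul, integral_const_mul]
  rw [integral_sphereMeasureR hR
    (continuous_poissonGradient (m + 2) hx).norm.aestronglyMeasurable, smul_eq_mul]
  simp only [hprofile]
  rw [integral_toSphere_inner he (measurable_poissonGradientProfile _ _ _)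
      (poissonGradientProfile_nonneg _ _ _),
    integral_poissonGradientProfile m (norm_nonneg x) (mem_ball_zero_iff.1 hx),
    Real.norm_of_nonneg (by positivity), TcoefR]
  simp only [Nat.add_sub_cancel, Nat.add_succ_sub_one]
  field_simp

end PoissonIntegral

/-- For `n ≥ 2`, `R > 0` and `x` in the open ball `𝔹_R ⊂ ℝⁿ`, the
smallest constant `c` such that `|div u(x)| ≤ c ‖g‖_{[L^∞(∂𝔹_R)]^n}` for every
Poisson integral `u` of `g ∈ [L^∞(∂𝔹_R)]^n` (equivalently, such that
`|div u(x)| ≤ c` whenever `‖g‖_∞ ≤ 1`) equals `𝒯_{n,R}(x)`. -/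
theorem sharp_divergence_coefficient_ball_radius
    (n : ℕ) (hn : 2 ≤ n) (R : ℝ) (hR : 0 < R)
    (x : Eu n) (hx : x ∈ Metric.ball (0 : Eu n) R) :
    IsLeast {c : ℝ |
        ∀ g : Metric.sphere (0 : Eu n) R → Eu n, Measurable g →
          (∀ᵐ y ∂(sphereMeasureR n R hR), ‖g y‖ ≤ 1) →
          |divg (poissonBallRV R hR g) x| ≤ c}
      (TcoefR n R ‖x‖) := by
  obtain ⟨m, rfl⟩ := Nat.exists_eq_add_of_le' hn
  set K : sphere (0 : Eu (m + 2)) R → Eu (m + 2) :=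
    fun y => (1 / (sphereArea (m + 2) * R)) • poissonGradient (m + 2) R x y
  have hK : Continuous K := (continuous_poissonGradient (m + 2) hx).fun_const_smul _
  have hK_int : Integrable K (sphereMeasureR (m + 2) R hR) :=
    hK.integrable_of_hasCompactSupport (HasCompactSupport.of_compactSpace K)
  have hdiv (g : sphere (0 : Eu (m + 2)) R → Eu (m + 2)) (hg : Measurable g)
      (hg_le : ∀ᵐ y ∂sphereMeasureR (m + 2) R hR, ‖g y‖ ≤ 1) :
      divg (poissonBallRV R hR g) x = ∫ y, ⟪K y, g y⟫ ∂sphereMeasureR (m + 2) R hR :=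
    divg_poissonBallRV hR hx (Integrable.of_bound hg.aestronglyMeasurable 1 hg_le)
  have hleast := isLeast_integral_norm hK.measurable hK_int
  rw [integral_norm_poissonGradient_eq_TcoefR hR hx] at hleast
  exact ⟨fun g hg hg_le => hdiv g hg hg_le ▸ hleast.1 g hg hg_le,
    fun c hc => hleast.2 fun g hg hg_le => hdiv g hg hg_le ▸ hc g hg hg_le⟩
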